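/- arXiv:2006.09317 — 4 statements merged into one kernel-verified Lean document; each statement's English description precedes it below -/
import Mathlib

section
/- Let A be a unital C*-algebra and let a, b ∈ A be positive elements with a·b = 0 such that the spectrum of a + b is contained in {0} ∪ [ε, ∞) for some ε > 0. Then the spectrum of a is contained in {0} ∪ [ε, ∞) and the spectrum of b is contained in {0} ∪ [ε, ∞). -/
section OrthogonalSum

variable {R A : Type*} [Ring A] {a b : A}

theorem algebraMap_sub_mul_algebraMap_sub_of_mul_eq_zero [CommRing R] [Algebra R A]
    (hab : a * b = 0) (r : R) :
    (algebraMap R A r - a) * (algebraMap R A r - b) =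
      algebraMap R A r * (algebraMap R A r - (a + b)) := by
  simp only [mul_sub, sub_mul, mul_add, hab, Algebra.commutes r a]
  abel

theorem mem_spectrum_add_iff_of_mul_eq_zero [CommRing R] [Algebra R A]
    (hcomm : Commute a b) (hab : a * b = 0) {r : R} (hr : IsUnit r) :
    r ∈ spectrum R (a + b) ↔ r ∈ spectrum R a ∨ r ∈ spectrum R b := by
  have hcomm_sub : Commute (algebraMap R A r - a) (algebraMap R A r - b) :=
    (Algebra.commute_algebraMap_left r _).sub_left
      ((Algebra.commute_algebraMap_right r a).sub_right hcomm)
  have hunit_iff : IsUnit (algebraMap R A r - (a + b)) ↔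
      IsUnit (algebraMap R A r - a) ∧ IsUnit (algebraMap R A r - b) := by
    rw [← hcomm_sub.isUnit_mul_iff, algebraMap_sub_mul_algebraMap_sub_of_mul_eq_zero hab,
      (Algebra.commute_algebraMap_left r _).isUnit_mul_iff,
      and_iff_right (hr.map (algebraMap R A))]
  rw [spectrum.mem_iff, spectrum.mem_iff, spectrum.mem_iff, hunit_iff, not_and_or]

theorem spectrum_add_sdiff_zero_of_mul_eq_zero [Field R] [Algebra R A]
    (hcomm : Commute a b) (hab : a * b = 0) :
    spectrum R (a + b) \ {0} = (spectrum R a ∪ spectrum R b) \ {0} := by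
  ext r
  exact and_congr_left fun hr ↦ mem_spectrum_add_iff_of_mul_eq_zero hcomm hab (.mk0 r hr)

theorem stmt_3_general [Field R] [Algebra R A] (hcomm : Commute a b) (hab : a * b = 0)
    {S : Set R} (hspec : spectrum R (a + b) ⊆ {0} ∪ S) :
    spectrum R a ⊆ {0} ∪ S ∧ spectrum R b ⊆ {0} ∪ S := by
  rwa [← Set.union_subset_iff, ← Set.sdiff_subset_iff,
    ← spectrum_add_sdiff_zero_of_mul_eq_zero hcomm hab, Set.sdiff_subset_iff]

end OrthogonalSum

/-- In a unital C*-algebra, if `a` and `b` are positive (selfadjoint with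
nonnegative spectrum) with `a * b = 0`, and the spectrum of `a + b` is contained in
`{0} ∪ [ε, ∞)` for some `ε > 0`, then the spectra of `a` and of `b` are both contained in
`{0} ∪ [ε, ∞)`. -/
theorem stmt_3 {A : Type*} [CStarAlgebra A] (a b : A)
    (ha : IsSelfAdjoint a) (hb : IsSelfAdjoint b)
    (ha' : spectrum ℝ a ⊆ Set.Ici 0) (hb' : spectrum ℝ b ⊆ Set.Ici 0)
    (hab : a * b = 0)
    (ε : ℝ) (hε : 0 < ε) (hspec : spectrum ℝ (a + b) ⊆ {0} ∪ Set.Ici ε) :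
    spectrum ℝ a ⊆ {0} ∪ Set.Ici ε ∧ spectrum ℝ b ⊆ {0} ∪ Set.Ici ε :=
  stmt_3_general (ha.commute_of_mul_eq_zero hb hab) hab hspec
end

section
/- Let A be a unital C*-algebra and let a, b ∈ A be positive elements with a·b = 0, and suppose the spectrum of a + b is contained in {0} ∪ [ε, ∞) for some ε > 0. Let p_a, p_b, p ∈ A be the projections satisfying: a·p_a = p_a·a = 0 and a + p_a is invertible; b·p_b = p_b·b = 0 and b + p_b is invertible; (a+b)·p = p·(a+b) = 0 and (a+b) + p is invertible. Then p = p_a · p_b. -/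
/-!
An element `x` is annihilated by `c` exactly when it is fixed by the spectral idempotent of `c`
at `0`. Hence `a * b = 0` gives `a * pb = a` and `pa * b = b`, so that
`(a + pa) * (b + pb) = a + b + pa * pb`: the right-hand side is a product of units, and
`pa * pb` is the spectral idempotent of `a + b`, which is unique.
-/

/-- `q` is the spectral idempotent of `c` at `0`. In a C⋆-algebra, for selfadjoint `c` and `q`, this
is the spectral projection of `c` at `0`; the algebraic characterization makes sense in any
semiring. -/
structure IsSpectralIdempotentAtZero {R : Type*} [Semiring R] (c q : R) : Prop where
  isIdempotentElem : IsIdempotentElem q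
  mul_eq_zero : c * q = 0
  mul_eq_zero' : q * c = 0
  isUnit_add : IsUnit (c + q)

namespace IsSpectralIdempotentAtZero

variable {R : Type*} [Semiring R] {a b c pa pb q q' x : R}

theorem mul_left_eq_zero_iff (h : IsSpectralIdempotentAtZero c q) : c * x = 0 ↔ q * x = x where
  mp hx := h.isUnit_add.mul_left_cancel <| calc
    (c + q) * (q * x) = c * q * x + q * q * x := by simp only [add_mul, mul_assoc]
    _ = (c + q) * x := by rw [h.mul_eq_zero, h.isIdempotentElem.eq, zero_mul, add_mul, hx]
  mpr hx := by rw [← hx, ← mul_assoc, h.mul_eq_zero, zero_mul]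

theorem mul_right_eq_zero_iff (h : IsSpectralIdempotentAtZero c q) : x * c = 0 ↔ x * q = x where
  mp hx := h.isUnit_add.mul_right_cancel <| calc
    x * q * (c + q) = x * (q * c) + x * (q * q) := by simp only [mul_add, mul_assoc]
    _ = x * (c + q) := by rw [h.mul_eq_zero', h.isIdempotentElem.eq, mul_zero, mul_add, hx]
  mpr hx := by rw [← hx, mul_assoc, h.mul_eq_zero', mul_zero]

theorem unique (h : IsSpectralIdempotentAtZero c q) (h' : IsSpectralIdempotentAtZero c q') :
    q = q' :=
  calc
    q = q * q' := (h'.mul_right_eq_zero_iff.mp h.mul_eq_zero').symm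
    _ = q' := h.mul_left_eq_zero_iff.mp h'.mul_eq_zero

theorem commute (h : IsSpectralIdempotentAtZero c q) (hx : Commute c x) : Commute q x := by
  have left_annihilated : c * (x * q) = 0 := by
    rw [← mul_assoc, hx.eq, mul_assoc, h.mul_eq_zero, mul_zero]
  have right_annihilated : q * x * c = 0 := by
    rw [mul_assoc, ← hx.eq, ← mul_assoc, h.mul_eq_zero', zero_mul]
  calc
    q * x = q * x * q := (h.mul_right_eq_zero_iff.mp right_annihilated).symm
    _ = q * (x * q) := mul_assoc q x q
    _ = x * q := h.mul_left_eq_zero_iff.mp left_annihilated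

theorem commute_of_mul_eq_zero (ha : IsSpectralIdempotentAtZero a pa)
    (hb : IsSpectralIdempotentAtZero b pb) (hab : a * b = 0) (hba : b * a = 0) :
    Commute pa pb :=
  have commute_ab : Commute a b := hab.trans hba.symm
  (hb.commute (ha.commute commute_ab).symm).symm

theorem add_mul_add (ha : IsSpectralIdempotentAtZero a pa)
    (hb : IsSpectralIdempotentAtZero b pb) (hab : a * b = 0) :
    (a + pa) * (b + pb) = a + b + pa * pb := by
  have a_mul_pb : a * pb = a := hb.mul_right_eq_zero_iff.mp hab
  have pa_mul_b : pa * b = b := ha.mul_left_eq_zero_iff.mp hab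
  rw [add_mul, mul_add, mul_add, hab, a_mul_pb, pa_mul_b, zero_add, add_assoc]

theorem add (ha : IsSpectralIdempotentAtZero a pa) (hb : IsSpectralIdempotentAtZero b pb)
    (hab : a * b = 0) (hba : b * a = 0) : IsSpectralIdempotentAtZero (a + b) (pa * pb) where
  isIdempotentElem := ha.isIdempotentElem.mul_of_commute
    (ha.commute_of_mul_eq_zero hb hab hba) hb.isIdempotentElem
  mul_eq_zero := by
    have b_mul_pa : b * pa = b := ha.mul_right_eq_zero_iff.mp hba
    rw [add_mul, ← mul_assoc, ← mul_assoc, ha.mul_eq_zero, b_mul_pa, hb.mul_eq_zero, zero_mul,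
      zero_add]
  mul_eq_zero' := by
    have pb_mul_a : pb * a = a := hb.mul_left_eq_zero_iff.mp hba
    rw [mul_add, mul_assoc, mul_assoc, pb_mul_a, ha.mul_eq_zero', hb.mul_eq_zero', mul_zero,
      zero_add]
  isUnit_add := ha.add_mul_add hb hab ▸ ha.isUnit_add.mul hb.isUnit_add

end IsSpectralIdempotentAtZero

theorem stmt_4_general {R : Type*} [Semiring R] {a b pa pb p : R} (hab : a * b = 0)
    (hba : b * a = 0) (ha : IsSpectralIdempotentAtZero a pa)
    (hb : IsSpectralIdempotentAtZero b pb) (hp : IsSpectralIdempotentAtZero (a + b) p) :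
    p = pa * pb :=
  hp.unique (ha.add hb hab hba)

/-- In a unital C*-algebra, let `a`, `b` be positive elements with `a * b = 0`
and suppose the spectrum of `a + b` is contained in `{0} ∪ [ε, ∞)` for some `ε > 0`.
If `pa`, `pb`, `p` are the spectral projections at `0` of `a`, `b`, `a + b` respectively
(characterized by being projections annihilating the element whose sum with the element is
invertible), then `p = pa * pb`. -/
theorem stmt_4 {A : Type*} [CStarAlgebra A] (a b pa pb p : A)
    (ha : IsSelfAdjoint a) (hb : IsSelfAdjoint b)
    (ha' : spectrum ℝ a ⊆ Set.Ici 0) (hb' : spectrum ℝ b ⊆ Set.Ici 0)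
    (hab : a * b = 0)
    (ε : ℝ) (hε : 0 < ε) (hspec : spectrum ℝ (a + b) ⊆ {0} ∪ Set.Ici ε)
    (hpa_star : star pa = pa) (hpa_idem : pa * pa = pa)
    (hapa : a * pa = 0) (hpaa : pa * a = 0) (hainv : IsUnit (a + pa))
    (hpb_star : star pb = pb) (hpb_idem : pb * pb = pb)
    (hbpb : b * pb = 0) (hpbb : pb * b = 0) (hbinv : IsUnit (b + pb))
    (hp_star : star p = p) (hp_idem : p * p = p)
    (habp : (a + b) * p = 0) (hpab : p * (a + b) = 0) (habinv : IsUnit ((a + b) + p)) :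
    p = pa * pb := by
  have hba : b * a = 0 := ((ha.commute_iff hb).mpr (hab ▸ .zero A)).eq.symm.trans hab
  exact stmt_4_general hab hba ⟨hpa_idem, hapa, hpaa, hainv⟩ ⟨hpb_idem, hbpb, hpbb, hbinv⟩
    ⟨hp_idem, habp, hpab, habinv⟩
end

section
/- Let H₁ and H₂ be complex Hilbert spaces and let T : H₁ → H₂ be a bounded linear operator. Then the range of T is a closed subspace of H₂ if and only if there exists ε > 0 such that the spectrum of T* T (where * denotes the Hilbert-space adjoint) is contained in {0} ∪ [ε, ∞). -/
/-!
Write `A = T* T`. Both sides of the equivalence amount to an operator inequality `ε A ≤ A²`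
with `ε > 0`, that is, `ε ‖T x‖² ≤ ‖T* T x‖²` for all `x`. By the functional calculus
this inequality says `ε t ≤ t²` for every `t` in the spectrum of `A`, which is the spectral gap
since `A ≥ 0`.
It also says that `T*` is bounded below on the range of `T`: if the range is closed, this comes from
the open mapping theorem; conversely the bound persists on the closure `K` of the range, so `T T*`
is coercive on `K`, hence maps `K` onto itself, and `K` is contained in the range of `T`.
-/

open ContinuousLinearMap RCLike
open scoped InnerProductSpace

theorem spectrum_subset_zero_union_Ici_iff_smul_le_mul_self {A : Type*} [Ring A] [StarRing A]
    [TopologicalSpace A] [PartialOrder A] [StarOrderedRing A] [Algebra ℝ A]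
    [ContinuousFunctionalCalculus ℝ A IsSelfAdjoint] [NonnegSpectrumClass ℝ A]
    {a : A} (ha : 0 ≤ a) (ε : ℝ) :
    spectrum ℝ a ⊆ {0} ∪ Set.Ici ε ↔ ε • a ≤ a * a := by
  have cfc_smul_self : cfc (fun t : ℝ ↦ ε * t) a = ε • a := by
    rw [cfc_const_mul ε (fun t : ℝ ↦ t) a, cfc_id' ℝ a]
  have cfc_mul_self : cfc (fun t : ℝ ↦ t * t) a = a * a := by
    rw [cfc_mul (fun t : ℝ ↦ t) (fun t ↦ t) a, cfc_id' ℝ a]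
  rw [← cfc_smul_self, ← cfc_mul_self, cfc_le_iff (fun t : ℝ ↦ ε * t) (fun t ↦ t * t) a]
  refine forall₂_congr fun t ht ↦ ?_
  rcases (spectrum_nonneg_of_nonneg ha ht).eq_or_lt with rfl | ht_pos
  · simp
  · simp [ht_pos.ne', mul_le_mul_iff_left₀ ht_pos]

theorem exists_pos_forall_exists_map_eq_and_norm_le_of_isClosed_range {𝕜 E F : Type*}
    [NontriviallyNormedField 𝕜] [NormedAddCommGroup E] [NormedSpace 𝕜 E] [CompleteSpace E]
    [NormedAddCommGroup F] [NormedSpace 𝕜 F] [CompleteSpace F]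
    {T : E →L[𝕜] F} (hT : IsClosed (Set.range T)) :
    ∃ C > 0, ∀ x, ∃ x', T x' = T x ∧ ‖x'‖ ≤ C * ‖T x‖ := by
  have : CompleteSpace T.range := hT.completeSpace_coe
  obtain ⟨C, hC, exists_preimage⟩ :=
    T.rangeRestrict.exists_preimage_norm_le T.toLinearMap.surjective_rangeRestrict
  refine ⟨C, hC, fun x ↦ ?_⟩
  obtain ⟨x', hx', norm_x'_le⟩ := exists_preimage (T.rangeRestrict x)
  exact ⟨x', congrArg Subtype.val hx', norm_x'_le⟩

section RCLike

variable {𝕜 E F : Type*} [RCLike 𝕜]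
  [NormedAddCommGroup E] [InnerProductSpace 𝕜 E]
  [NormedAddCommGroup F] [InnerProductSpace 𝕜 F]

theorem le_iff_forall_re_inner_le {S T : E →L[𝕜] E}
    (hS : (S : E →ₗ[𝕜] E).IsSymmetric) (hT : (T : E →ₗ[𝕜] E).IsSymmetric) :
    S ≤ T ↔ ∀ x, re ⟪S x, x⟫_𝕜 ≤ re ⟪T x, x⟫_𝕜 := by
  simp [le_def, isPositive_def, hT.sub hS, reApplyInnerSelf_apply, inner_sub_left]

variable [CompleteSpace E] [CompleteSpace F]

theorem smul_adjoint_comp_self_le_mul_self_iff [Module ℝ (E →L[𝕜] E)]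
    [IsScalarTower ℝ 𝕜 (E →L[𝕜] E)] (T : E →L[𝕜] F) (ε : ℝ) :
    ε • (adjoint T ∘L T) ≤ (adjoint T ∘L T) * (adjoint T ∘L T) ↔
      ∀ x, ε * ‖T x‖ ^ 2 ≤ ‖adjoint T (T x)‖ ^ 2 := by
  have hA : ((adjoint T ∘L T : E →L[𝕜] E) : E →ₗ[𝕜] E).IsSymmetric :=
    (isPositive_adjoint_comp_self T).isSymmetric
  have re_inner_smul (x : E) :
      re ⟪((ε : 𝕜) • (adjoint T ∘L T)) x, x⟫_𝕜 = ε * ‖T x‖ ^ 2 := by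
    rw [smul_apply, inner_smul_left, conj_ofReal, re_ofReal_mul, comp_apply, adjoint_inner_left,
      inner_self_eq_norm_sq]
  have re_inner_mul (x : E) :
      re ⟪((adjoint T ∘L T) * (adjoint T ∘L T)) x, x⟫_𝕜 = ‖adjoint T (T x)‖ ^ 2 := by
    rw [← inner_self_eq_norm_sq (𝕜 := 𝕜)]
    exact congrArg re (hA (adjoint T (T x)) x)
  rw [← algebraMap_smul 𝕜 ε (adjoint T ∘L T), algebraMap_eq_ofReal,
    le_iff_forall_re_inner_le (hA.smul (conj_ofReal ε)) (hA.mul_of_commute hA rfl)]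
  simp only [re_inner_smul, re_inner_mul]

variable {T : E →L[𝕜] F}

theorem norm_map_sq_le_norm_adjoint_mul_norm {x x' : E} (h : T x' = T x) :
    ‖T x‖ ^ 2 ≤ ‖adjoint T (T x)‖ * ‖x'‖ :=
  calc ‖T x‖ ^ 2 = re ⟪adjoint T (T x), x'⟫_𝕜 := by
        rw [adjoint_inner_left, h, inner_self_eq_norm_sq]
    _ ≤ ‖adjoint T (T x)‖ * ‖x'‖ := re_inner_le_norm _ _

theorem exists_pos_mul_norm_sq_le_of_isClosed_range (hT : IsClosed (Set.range T)) :
    ∃ ε : ℝ, 0 < ε ∧ ∀ x, ε * ‖T x‖ ^ 2 ≤ ‖adjoint T (T x)‖ ^ 2 := by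
  obtain ⟨C, hC, exists_preimage⟩ :=
    exists_pos_forall_exists_map_eq_and_norm_le_of_isClosed_range hT
  refine ⟨(C ^ 2)⁻¹, by positivity, fun x ↦ ?_⟩
  obtain ⟨x', hx', norm_x'_le⟩ := exists_preimage x
  have norm_sq_le : ‖T x‖ * ‖T x‖ ≤ C * ‖adjoint T (T x)‖ * ‖T x‖ :=
    calc ‖T x‖ * ‖T x‖ = ‖T x‖ ^ 2 := (sq _).symm
      _ ≤ ‖adjoint T (T x)‖ * ‖x'‖ := norm_map_sq_le_norm_adjoint_mul_norm hx'
      _ ≤ ‖adjoint T (T x)‖ * (C * ‖T x‖) := by gcongr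
      _ = C * ‖adjoint T (T x)‖ * ‖T x‖ := by ring
  have norm_le : ‖T x‖ ≤ C * ‖adjoint T (T x)‖ := by
    rcases (norm_nonneg (T x)).eq_or_lt with h_zero | h_pos
    · rw [← h_zero]; positivity
    · exact le_of_mul_le_mul_right norm_sq_le h_pos
  rw [inv_mul_le_iff₀ (by positivity), ← mul_pow]
  gcongr

theorem mul_norm_sq_le_norm_adjoint_sq_of_mem_closure {ε : ℝ}
    (h : ∀ x, ε * ‖T x‖ ^ 2 ≤ ‖adjoint T (T x)‖ ^ 2) {y : F} (hy : y ∈ closure (Set.range T)) :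
    ε * ‖y‖ ^ 2 ≤ ‖adjoint T y‖ ^ 2 := by
  have isClosed_bound : IsClosed {y : F | ε * ‖y‖ ^ 2 ≤ ‖adjoint T y‖ ^ 2} :=
    isClosed_le (by fun_prop) (by fun_prop)
  exact closure_minimal (Set.range_subset_iff.2 h) isClosed_bound hy

theorem isClosed_range_of_mul_norm_sq_le {ε : ℝ} (hε : 0 < ε)
    (h : ∀ x, ε * ‖T x‖ ^ 2 ≤ ‖adjoint T (T x)‖ ^ 2) : IsClosed (Set.range T) := by
  let K : Submodule 𝕜 F := T.range.topologicalClosure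
  have range_le : T.range ≤ K := T.range.le_topologicalClosure
  have : CompleteSpace K := T.range.isClosed_topologicalClosure.completeSpace_coe
  let S : K →L[𝕜] K := (T ∘L adjoint T ∘L K.subtypeL).codRestrict K fun y ↦
    range_le ⟨adjoint T y, rfl⟩
  have S_coercive (y : K) : ‖y‖ ^ 2 * ε ≤ ‖⟪S y, y⟫_𝕜‖ :=
    calc ‖y‖ ^ 2 * ε = ε * ‖(y : F)‖ ^ 2 := mul_comm _ _
      _ ≤ ‖adjoint T y‖ ^ 2 := mul_norm_sq_le_norm_adjoint_sq_of_mem_closure h y.2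
      _ = re ⟪T (adjoint T y), (y : F)⟫_𝕜 := by
        rw [← adjoint_inner_right, inner_self_eq_norm_sq]
      _ ≤ ‖⟪S y, y⟫_𝕜‖ := re_le_norm _
  have S_isUnit : IsUnit S :=
    isUnit_of_forall_le_norm_inner_map S (c := ⟨ε, hε.le⟩) hε S_coercive
  refine isClosed_of_closure_subset fun y hy ↦ ?_
  obtain ⟨z, hz⟩ := (isUnit_iff_bijective.1 S_isUnit).surjective ⟨y, hy⟩
  exact ⟨adjoint T z, congrArg Subtype.val hz⟩

theorem isClosed_range_iff_exists_pos_mul_norm_sq_le :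
    IsClosed (Set.range T) ↔
      ∃ ε : ℝ, 0 < ε ∧ ∀ x, ε * ‖T x‖ ^ 2 ≤ ‖adjoint T (T x)‖ ^ 2 :=
  ⟨exists_pos_mul_norm_sq_le_of_isClosed_range,
    fun ⟨_, hε, h⟩ ↦ isClosed_range_of_mul_norm_sq_le hε h⟩

end RCLike

open ContinuousLinearMap in
/-- For a bounded operator `T : H₁ → H₂` between complex Hilbert spaces,
the range of `T` is closed if and only if the positive operator `T* T` has a spectral gap
at `0`, i.e. its spectrum is contained in `{0} ∪ [ε, ∞)` for some `ε > 0`. -/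
theorem stmt_8 {H₁ H₂ : Type*}
    [NormedAddCommGroup H₁] [InnerProductSpace ℂ H₁] [CompleteSpace H₁]
    [NormedAddCommGroup H₂] [InnerProductSpace ℂ H₂] [CompleteSpace H₂]
    (T : H₁ →L[ℂ] H₂) :
    IsClosed (Set.range T)
      ↔ ∃ ε : ℝ, 0 < ε ∧ spectrum ℝ ((adjoint T).comp T) ⊆ {0} ∪ Set.Ici ε := by
  have hA : 0 ≤ adjoint T ∘L T := (nonneg_iff_isPositive _).2 (isPositive_adjoint_comp_self T)
  simp only [isClosed_range_iff_exists_pos_mul_norm_sq_le,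
    spectrum_subset_zero_union_Ici_iff_smul_le_mul_self hA, smul_adjoint_comp_self_le_mul_self_iff]
end

section
/- Let F be the free group on n ≥ 2 generators with free generating set S = {x₁, …, x_n}. Then the operator Δ₀ = Σ_{i=1}^{n} (2·Id − λ(x_i) − λ(x_i⁻¹)) on ℓ²(F, ℂ), where λ is the left regular representation, is invertible as a bounded operator; equivalently, 0 does not belong to the spectrum of Δ₀, so that Δ₀ has a spectral gap with trivial kernel. -/
/-!
Write `Δ₀ = 2n - A`, where `A` is the sum of `λ(s)` over the `2n` letters `s = xᵢ^{±1}`. Kesten's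
bound `‖A‖ ≤ 2 √(2n - 1)` follows from a weighted Schur test: put `r = √(2n - 1)` and give the edge
from `g` to `s⁻¹ g` of the Cayley tree the weight `r` if it leads towards the root and `r⁻¹`
otherwise. At most one edge at each vertex leads towards the root, so the weights there sum to at
most `r + (2n - 1) / r = 2 √(2n - 1)`. Reversing an edge inverts its weight, so the inverse weights
of the incoming edges obey the same bound. For `n ≥ 2` this is less than `2n`, and `2n - A` is
invertible by a Neumann series.
-/

open scoped lp

section Reindexing

variable {X Y 𝕜 E : Type*} [NormedAddCommGroup E]

theorem hasSum_norm_sq_l2 (f : ℓ²(X, E)) : HasSum (fun x => ‖f x‖ ^ 2) (‖f‖ ^ 2) := by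
  simpa using lp.hasSum_norm (p := 2) (by norm_num) f

theorem memℓp_two_comp_equiv (e : X ≃ Y) (f : ℓ²(Y, E)) : Memℓp (fun x => f (e x)) 2 := by
  refine memℓp_gen ?_
  simpa [Function.comp_def] using e.summable_iff.mpr (hasSum_norm_sq_l2 f).summable

variable (𝕜 E) [NontriviallyNormedField 𝕜] [NormedSpace 𝕜 E]

/-- The isometry `f ↦ f ∘ e` between `ℓ²`-spaces induced by a bijection `e` of index sets; the
permutation operators on `ℓ²` are the case `X = Y`. -/
noncomputable def l2Reindex (e : X ≃ Y) : ℓ²(Y, E) →ₗᵢ[𝕜] ℓ²(X, E) where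
  toFun f := ⟨fun x => f (e x), memℓp_two_comp_equiv e f⟩
  map_add' _ _ := rfl
  map_smul' _ _ := rfl
  norm_map' f := by
    rw [← sq_eq_sq₀ (norm_nonneg _) (norm_nonneg _)]
    exact (hasSum_norm_sq_l2 _).unique (e.hasSum_iff.mpr (hasSum_norm_sq_l2 f))

variable {E}

theorem l2Reindex_apply (e : X ≃ Y) (f : ℓ²(Y, E)) (x : X) : l2Reindex 𝕜 E e f x = f (e x) :=
  rfl

end Reindexing

section SchurTest

theorem sq_norm_sum_le_sum_mul_sum_sq_norm_div {ι E : Type*} [SeminormedAddCommGroup E]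
    (s : Finset ι) (v : ι → E) {w : ι → ℝ} (hw : ∀ i ∈ s, 0 < w i) :
    ‖∑ i ∈ s, v i‖ ^ 2 ≤ (∑ i ∈ s, w i) * ∑ i ∈ s, ‖v i‖ ^ 2 / w i :=
  calc ‖∑ i ∈ s, v i‖ ^ 2
      ≤ (∑ i ∈ s, ‖v i‖) ^ 2 := by gcongr; exact norm_sum_le _ _
    _ ≤ (∑ i ∈ s, w i) * ∑ i ∈ s, ‖v i‖ ^ 2 / w i :=
        Finset.sum_sq_le_sum_mul_sum_of_sq_le_mul s (fun i hi => (hw i hi).le)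
          (fun i hi => div_nonneg (sq_nonneg _) (hw i hi).le)
          (fun i hi => (mul_div_cancel₀ _ (hw i hi).ne').ge)

variable {ι X Y E : Type*} [Fintype ι] [NormedAddCommGroup E] {e : ι → X ≃ Y} {w : ι → X → ℝ}
  {C D : ℝ}

theorem summable_norm_sq_comp_equiv_div (hw : ∀ i x, 0 < w i x)
    (hD : ∀ y, ∑ i, (w i ((e i).symm y))⁻¹ ≤ D) (f : ℓ²(Y, E)) (i : ι) :
    Summable fun y => ‖f y‖ ^ 2 / w i ((e i).symm y) := by
  have inv_weight_le (y : Y) : (w i ((e i).symm y))⁻¹ ≤ D :=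
    (Finset.single_le_sum (f := fun j => (w j ((e j).symm y))⁻¹)
      (fun j _ => (inv_pos.mpr (hw j _)).le) (Finset.mem_univ i)).trans (hD y)
  refine .of_nonneg_of_le (fun y => div_nonneg (sq_nonneg _) (hw i _).le) (fun y => ?_)
    ((hasSum_norm_sq_l2 f).summable.mul_right D)
  rw [div_eq_mul_inv]
  gcongr
  exact inv_weight_le y

theorem exists_hasSum_sum_norm_sq_div_le (hw : ∀ i x, 0 < w i x)
    (hD : ∀ y, ∑ i, (w i ((e i).symm y))⁻¹ ≤ D) (f : ℓ²(Y, E)) :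
    ∃ S ≤ D * ‖f‖ ^ 2, HasSum (fun x => ∑ i, ‖f (e i x)‖ ^ 2 / w i x) S := by
  have hsum (i : ι) := (summable_norm_sq_comp_equiv_div hw hD f i).hasSum
  refine ⟨∑ i, ∑' y, ‖f y‖ ^ 2 / w i ((e i).symm y), ?_, hasSum_sum fun i _ => ?_⟩
  · refine hasSum_le (fun y => ?_) (hasSum_sum fun i _ => hsum i)
      ((hasSum_norm_sq_l2 f).mul_left D)
    simp_rw [div_eq_mul_inv, ← Finset.mul_sum, mul_comm D]
    gcongr
    exact hD y
  · simpa [Function.comp_def] using (e i).hasSum_iff.mpr (hsum i)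

variable (𝕜 : Type*) [NontriviallyNormedField 𝕜] [NormedSpace 𝕜 E]

theorem norm_sum_l2Reindex_le (hC₀ : 0 ≤ C) (hw : ∀ i x, 0 < w i x) (hC : ∀ x, ∑ i, w i x ≤ C)
    (hD : ∀ y, ∑ i, (w i ((e i).symm y))⁻¹ ≤ D) :
    ‖∑ i, (l2Reindex 𝕜 E (e i)).toContinuousLinearMap‖ ≤ √(C * D) := by
  set T := ∑ i, (l2Reindex 𝕜 E (e i)).toContinuousLinearMap with hT
  have T_apply (f : ℓ²(Y, E)) (x : X) : T f x = ∑ i, f (e i x) := by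
    rw [hT, sum_apply, lp.coeFn_sum, Finset.sum_apply]
    simp only [LinearIsometry.coe_toContinuousLinearMap, l2Reindex_apply]
  refine T.opNorm_le_bound (Real.sqrt_nonneg _) fun f => ?_
  obtain ⟨S, hS, hasSum_S⟩ := exists_hasSum_sum_norm_sq_div_le hw hD f
  have pointwise_bound (x : X) : ‖T f x‖ ^ 2 ≤ C * ∑ i, ‖f (e i x)‖ ^ 2 / w i x :=
    calc ‖T f x‖ ^ 2
        ≤ (∑ i, w i x) * ∑ i, ‖f (e i x)‖ ^ 2 / w i x := by
          rw [T_apply]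
          exact sq_norm_sum_le_sum_mul_sum_sq_norm_div _ _ fun i _ => hw i x
      _ ≤ C * ∑ i, ‖f (e i x)‖ ^ 2 / w i x := by
          gcongr
          · exact Finset.sum_nonneg fun i _ => div_nonneg (sq_nonneg _) (hw i x).le
          · exact hC x
  have norm_sq_bound : ‖T f‖ ^ 2 ≤ C * D * ‖f‖ ^ 2 :=
    calc ‖T f‖ ^ 2
        ≤ C * S := hasSum_le pointwise_bound (hasSum_norm_sq_l2 _) (hasSum_S.mul_left C)
      _ ≤ C * (D * ‖f‖ ^ 2) := by gcongr
      _ = C * D * ‖f‖ ^ 2 := (mul_assoc _ _ _).symm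
  calc ‖T f‖
      ≤ √(C * D * ‖f‖ ^ 2) := Real.le_sqrt_of_sq_le norm_sq_bound
    _ = √(C * D) * ‖f‖ := by
        rw [Real.sqrt_mul' _ (sq_nonneg _), Real.sqrt_sq (norm_nonneg _)]

end SchurTest

section FirstLetter

variable {α : Type*} [DecidableEq α]

theorem norm_inv_mk_mul_lt_of_mem_startsWith {l : α × Bool} {g : FreeGroup α}
    (hg : g ∈ FreeGroup.startsWith l) : ((FreeGroup.mk [l])⁻¹ * g).norm < g.norm := by
  obtain ⟨t, ht⟩ : ∃ t, g.toWord = l :: t := by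
    rcases h : g.toWord with _ | ⟨a, t⟩ <;> simp_all [FreeGroup.startsWith]
  have g_eq : g = FreeGroup.mk [l] * FreeGroup.mk t := by
    rw [FreeGroup.mul_mk, List.singleton_append, ← ht, FreeGroup.mk_toWord]
  calc ((FreeGroup.mk [l])⁻¹ * g).norm
      = (FreeGroup.mk t).norm := by rw [g_eq, inv_mul_cancel_left]
    _ ≤ t.length := FreeGroup.norm_mk_le
    _ < g.norm := by simp [FreeGroup.norm, ht]

theorem mk_mul_mem_startsWith_iff {l : α × Bool} {g : FreeGroup α} :
    FreeGroup.mk [l] * g ∈ FreeGroup.startsWith l ↔ g ∉ FreeGroup.startsWith (l.1, !l.2) := by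
  refine ⟨fun hlg hg => ?_, FreeGroup.startsWith_mk_mul g⟩
  have g_lt := norm_inv_mk_mul_lt_of_mem_startsWith hlg
  have lg_lt := norm_inv_mk_mul_lt_of_mem_startsWith hg
  have inv_letter : (FreeGroup.mk [(l.1, !l.2)])⁻¹ = FreeGroup.mk [l] := by
    simp [FreeGroup.inv_mk, FreeGroup.invRev]
  rw [inv_mul_cancel_left] at g_lt
  rw [inv_letter] at lg_lt
  exact lt_asymm g_lt lg_lt

open Classical in
/-- The Schur weight of the edge from `g` to `l⁻¹ g` in the Cayley tree of a free group: `r` if the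
edge leads towards the root, that is, if `g` starts with `l`, and `r⁻¹` otherwise. -/
noncomputable def letterWeight (r : ℝ) (l : α × Bool) (g : FreeGroup α) : ℝ :=
  if g ∈ FreeGroup.startsWith l then r else r⁻¹

theorem letterWeight_pos {r : ℝ} (hr : 0 < r) (l : α × Bool) (g : FreeGroup α) :
    0 < letterWeight r l g := by
  unfold letterWeight
  split_ifs <;> positivity

theorem inv_letterWeight_mk_mul (r : ℝ) (l : α × Bool) (g : FreeGroup α) :
    (letterWeight r l (FreeGroup.mk [l] * g))⁻¹ = letterWeight r (l.1, !l.2) g := by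
  by_cases hg : g ∈ FreeGroup.startsWith (l.1, !l.2) <;>
    simp [letterWeight, mk_mul_mem_startsWith_iff, hg]

variable [Fintype α]

theorem sum_letterWeight_le {r : ℝ} (hr : 1 ≤ r) (g : FreeGroup α) :
    ∑ l, letterWeight r l g ≤ r + (2 * Fintype.card α - 1) * r⁻¹ := by
  have inv_le : r⁻¹ ≤ r := (inv_le_one_of_one_le₀ hr).trans hr
  have weight_eq (l : α × Bool) : letterWeight r l g =
      r⁻¹ + if g.toWord[0]? = some l then r - r⁻¹ else 0 := by
    by_cases hg : g.toWord[0]? = some l <;> simp [letterWeight, FreeGroup.startsWith, hg]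
  have excess_le : ∑ l, (if g.toWord[0]? = some l then r - r⁻¹ else 0) ≤ r - r⁻¹ := by
    rcases g.toWord[0]? with _ | a
    · simpa using inv_le
    · simp
  calc ∑ l, letterWeight r l g
      = 2 * Fintype.card α * r⁻¹ + ∑ l, (if g.toWord[0]? = some l then r - r⁻¹ else 0) := by
        simp [weight_eq, Finset.sum_add_distrib, mul_comm]
    _ ≤ 2 * Fintype.card α * r⁻¹ + (r - r⁻¹) := by gcongr
    _ = r + (2 * Fintype.card α - 1) * r⁻¹ := by ring

theorem sum_inv_letterWeight_mk_mul (r : ℝ) (g : FreeGroup α) :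
    ∑ l, (letterWeight r l (FreeGroup.mk [l] * g))⁻¹ = ∑ l, letterWeight r l g := by
  simp_rw [inv_letterWeight_mk_mul]
  exact ((Equiv.refl α).prodCongr Equiv.boolNot).sum_comp fun l => letterWeight r l g

end FirstLetter

section Laplacian

/-- The left regular representation of `G` on `ℓ²(G, E)`, as in `(λ(g) f) h = f (g⁻¹ h)`. -/
noncomputable def l2LeftRegular (𝕜 E : Type*) {G : Type*} [NontriviallyNormedField 𝕜]
    [NormedAddCommGroup E] [NormedSpace 𝕜 E] [Group G] (g : G) : ℓ²(G, E) →L[𝕜] ℓ²(G, E) :=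
  (l2Reindex 𝕜 E (Equiv.mulLeft g⁻¹)).toContinuousLinearMap

variable (𝕜 α E : Type*) [Fintype α] [NormedAddCommGroup E]

/-- The adjacency operator `∑ₛ λ(s)` of the Cayley tree of a free group, where the pairs in
`α × Bool` encode the letters `s`, that is, the free generators and their inverses. -/
noncomputable def freeGroupAdjacency [NontriviallyNormedField 𝕜] [NormedSpace 𝕜 E] :
    ℓ²(FreeGroup α, E) →L[𝕜] ℓ²(FreeGroup α, E) :=
  ∑ l : α × Bool, l2LeftRegular 𝕜 E (FreeGroup.mk [l])

/-- The degree-0 Laplacian `∑ᵢ (2 - λ(xᵢ) - λ(xᵢ⁻¹))` of a free group. -/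
noncomputable def freeGroupLaplacian [NontriviallyNormedField 𝕜] [NormedSpace 𝕜 E] :
    ℓ²(FreeGroup α, E) →L[𝕜] ℓ²(FreeGroup α, E) :=
  ∑ i : α, ((2 : 𝕜) • 1 - l2LeftRegular 𝕜 E (FreeGroup.of i)
    - l2LeftRegular 𝕜 E (FreeGroup.of i)⁻¹)

variable {α E} in
theorem freeGroupLaplacian_apply [NontriviallyNormedField 𝕜] [NormedSpace 𝕜 E]
    (f : ℓ²(FreeGroup α, E)) (g : FreeGroup α) :
    freeGroupLaplacian 𝕜 α E f g =
      ∑ i, ((2 : 𝕜) • f g - f ((FreeGroup.of i)⁻¹ * g) - f (FreeGroup.of i * g)) := by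
  rw [freeGroupLaplacian, sum_apply, lp.coeFn_sum, Finset.sum_apply]
  refine Finset.sum_congr rfl fun i _ => ?_
  change (2 : 𝕜) • f g - f ((FreeGroup.of i)⁻¹ * g) - f ((FreeGroup.of i)⁻¹⁻¹ * g) = _
  rw [inv_inv]

theorem freeGroupLaplacian_eq_algebraMap_sub_adjacency [NontriviallyNormedField 𝕜]
    [NormedSpace 𝕜 E] :
    freeGroupLaplacian 𝕜 α E =
      algebraMap 𝕜 _ (2 * Fintype.card α) - freeGroupAdjacency 𝕜 α E := by
  have adjacency_eq : freeGroupAdjacency 𝕜 α E = ∑ i : α,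
      (l2LeftRegular 𝕜 E (FreeGroup.of i) + l2LeftRegular 𝕜 E (FreeGroup.of i)⁻¹) := by
    rw [freeGroupAdjacency, Fintype.sum_prod_type]
    simp only [Fintype.sum_bool]
    rfl
  simp only [freeGroupLaplacian, adjacency_eq, sub_sub, Finset.sum_sub_distrib, Finset.sum_const,
    Finset.card_univ, Algebra.algebraMap_eq_smul_one, ← Nat.cast_smul_eq_nsmul 𝕜, smul_smul,
    mul_comm]

theorem norm_freeGroupAdjacency_le [NontriviallyNormedField 𝕜] [NormedSpace 𝕜 E] [Nonempty α] :
    ‖freeGroupAdjacency 𝕜 α E‖ ≤ 2 * √(2 * Fintype.card α - 1) := by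
  classical
  set r := √(2 * Fintype.card α - 1 : ℝ) with hr
  have one_le_card : (1 : ℝ) ≤ Fintype.card α := mod_cast Fintype.card_pos
  have one_le_r : 1 ≤ r := Real.one_le_sqrt.mpr (by linarith)
  have sum_weight_le (g : FreeGroup α) : ∑ l, letterWeight r l g ≤ 2 * r := by
    refine (sum_letterWeight_le one_le_r g).trans_eq ?_
    rw [← Real.sq_sqrt (show (0 : ℝ) ≤ 2 * Fintype.card α - 1 by linarith), ← hr]
    field_simp
    ring
  have schur_bound := norm_sum_l2Reindex_le (E := E) 𝕜
    (e := fun l : α × Bool => Equiv.mulLeft (FreeGroup.mk [l])⁻¹) (w := letterWeight r)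
    (by positivity) (letterWeight_pos (by positivity)) sum_weight_le (D := 2 * r) fun g => by
      simpa [sum_inv_letterWeight_mk_mul] using sum_weight_le g
  rwa [Real.sqrt_mul_self (by positivity)] at schur_bound

theorem isUnit_freeGroupLaplacian [RCLike 𝕜] [NormedSpace 𝕜 E] [CompleteSpace E] [Nontrivial α] :
    IsUnit (freeGroupLaplacian 𝕜 α E) := by
  have one_lt_card : (1 : ℝ) < Fintype.card α := mod_cast Fintype.one_lt_card
  have kesten_lt : 2 * √(2 * Fintype.card α - 1) < (2 * Fintype.card α : ℝ) := by
    gcongr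
    rw [Real.sqrt_lt' (by positivity)]
    nlinarith
  rw [freeGroupLaplacian_eq_algebraMap_sub_adjacency]
  refine spectrum.mem_resolventSet_of_norm_lt_mul ?_
  calc ‖freeGroupAdjacency 𝕜 α E‖ * ‖(1 : ℓ²(FreeGroup α, E) →L[𝕜] ℓ²(FreeGroup α, E))‖
      ≤ ‖freeGroupAdjacency 𝕜 α E‖ :=
        mul_le_of_le_one_right (norm_nonneg _) ContinuousLinearMap.norm_id_le
    _ ≤ 2 * √(2 * Fintype.card α - 1) := norm_freeGroupAdjacency_le 𝕜 α E
    _ < 2 * Fintype.card α := kesten_lt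
    _ = ‖(2 * Fintype.card α : 𝕜)‖ := by simp

end Laplacian

theorem stmt_12_general (𝕜 α E : Type*) [RCLike 𝕜] [Fintype α] [Nontrivial α]
    [NormedAddCommGroup E] [NormedSpace 𝕜 E] [CompleteSpace E] :
    ∃ Δ : ℓ²(FreeGroup α, E) →L[𝕜] ℓ²(FreeGroup α, E),
      (∀ (f : ℓ²(FreeGroup α, E)) (g : FreeGroup α),
        Δ f g = ∑ i : α,
          ((2 : 𝕜) • f g - f ((FreeGroup.of i)⁻¹ * g) - f (FreeGroup.of i * g))) ∧
      IsUnit Δ ∧ (0 : 𝕜) ∉ spectrum 𝕜 Δ :=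
  have isUnit_laplacian := isUnit_freeGroupLaplacian 𝕜 α E
  ⟨freeGroupLaplacian 𝕜 α E, freeGroupLaplacian_apply 𝕜, isUnit_laplacian,
    (spectrum.zero_notMem_iff 𝕜).mpr isUnit_laplacian⟩

/-- Let `F` be the free group on `n ≥ 2` generators `x₀, …, x_{n-1}`.
The degree-0 Laplacian `Δ₀ = ∑ᵢ (2·Id - λ(xᵢ) - λ(xᵢ⁻¹))` on `ℓ²(F, ℂ)`, where `λ` is the
left regular representation (`(λ(g) f) h = f (g⁻¹ h)`), acts pointwise by
`(Δ₀ f) g = ∑ᵢ (2 f g - f (xᵢ⁻¹ g) - f (xᵢ g))`.  This bounded operator is invertible;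
equivalently, `0` does not belong to its spectrum, so `Δ₀` has a spectral gap with trivial
kernel. -/
theorem stmt_12 (n : ℕ) (hn : 2 ≤ n) :
    ∃ Δ : lp (fun _ : FreeGroup (Fin n) => ℂ) 2 →L[ℂ] lp (fun _ : FreeGroup (Fin n) => ℂ) 2,
      (∀ (f : lp (fun _ : FreeGroup (Fin n) => ℂ) 2) (g : FreeGroup (Fin n)),
        Δ f g = ∑ i : Fin n,
          ((2 : ℂ) * f g - f ((FreeGroup.of i)⁻¹ * g) - f (FreeGroup.of i * g))) ∧
      IsUnit Δ ∧ (0 : ℂ) ∉ spectrum ℂ Δ := by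
  have : Nontrivial (Fin n) := Fin.nontrivial_iff_two_le.mpr hn
  exact stmt_12_general ℂ (Fin n) ℂ
end
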